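/- Let Γ be a virtually polycyclic group. If the second group cohomology H²(Γ;ℤ) of Γ with trivial coefficients ℤ contains an element of infinite additive order (i.e., a non-torsion element x with n·x ≠ 0 for all integers n ≥ 1), then Γ is not matricially stable. -/

import Mathlib

noncomputable section
open scoped Classical

/-- The algebra of "n×n complex matrices" realized as bounded operators on `ℓ²(Fin n)`,
equipped with the ℓ²-operator norm. -/
abbrev Mat (n : ℕ) := EuclideanSpace ℂ (Fin n) →L[ℂ] EuclideanSpace ℂ (Fin n)

/-- The boundary of a 2-chain. -/
def chainBoundary {Γ : Type*} [Group Γ] (c : (Γ × Γ) →₀ ℤ) : Γ → ℤ :=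
  fun g => c.sum fun p x =>
    x * ((if p.2 = g then 1 else 0) - (if p.1 * p.2 = g then 1 else 0) +
      (if p.1 = g then 1 else 0))

/-- A 2-chain is a 2-cycle if its boundary vanishes. -/
def IsTwoCycle {Γ : Type*} [Group Γ] (c : (Γ × Γ) →₀ ℤ) : Prop :=
  chainBoundary c = 0

/-- The boundary support of a 2-chain: all `aᵢ`, `bᵢ`, `aᵢbᵢ` for `(aᵢ,bᵢ)` in the support. -/
def boundarySupport {Γ : Type*} [Group Γ] (c : (Γ × Γ) →₀ ℤ) : Set Γ :=
  ⋃ p ∈ c.support, {p.1, p.2, p.1 * p.2}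

/-- The pairing of a ℤ-valued 2-cochain with a 2-chain. -/
def pairInt {Γ : Type*} [Group Γ] (σ : Γ → Γ → ℤ) (c : (Γ × Γ) →₀ ℤ) : ℤ :=
  c.sum fun p x => x * σ p.1 p.2

/-- ℤ-valued 2-cocycle condition. -/
def IsTwoCocycle {Γ : Type*} [Group Γ] (σ : Γ → Γ → ℤ) : Prop :=
  ∀ g₁ g₂ g₃ : Γ, σ g₂ g₃ - σ (g₁ * g₂) g₃ + σ g₁ (g₂ * g₃) - σ g₁ g₂ = 0

/-- The logarithm defined as a power series centered at 1. -/
def matLog {n : ℕ} (m : Mat n) : Mat n :=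
  ∑' k : ℕ, ((-1 : ℂ) ^ k / (k + 1)) • (m - 1) ^ (k + 1)

/-- Trace of an operator. -/
def clmTrace {n : ℕ} (f : Mat n) : ℂ :=
  LinearMap.trace ℂ (EuclideanSpace ℂ (Fin n)) (f : EuclideanSpace ℂ (Fin n) →ₗ[ℂ] EuclideanSpace ℂ (Fin n))

/-- `ρ` is ε-almost multiplicative on the support of `c`. -/
def AlmostMultOn {Γ : Type*} [Group Γ] {n : ℕ} (ρ : Γ → Mat n)
    (c : (Γ × Γ) →₀ ℤ) (ε : ℝ) : Prop :=
  ∀ p ∈ c.support, IsUnit (ρ p.1) ∧ IsUnit (ρ p.2) ∧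
    ‖ρ (p.1 * p.2) * Ring.inverse (ρ p.1) * Ring.inverse (ρ p.2) - 1‖ < ε

/-- The pairing `⟨ρ,c⟩` between an almost multiplicative map and a 2-chain. -/
def pairRho {Γ : Type*} [Group Γ] {n : ℕ} (ρ : Γ → Mat n) (c : (Γ × Γ) →₀ ℤ) : ℂ :=
  (1 / (2 * Real.pi * Complex.I)) *
    c.sum fun p x => (x : ℂ) *
      clmTrace (matLog (ρ (p.1 * p.2) * Ring.inverse (ρ p.2) * Ring.inverse (ρ p.1)))

/-- A sequence of unitary-valued maps forms an asymptotic representation. -/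
def IsAsymptoticRep {Γ : Type*} [Group Γ] (N : ℕ → ℕ) (ρ : ∀ k, Γ → Mat (N k)) : Prop :=
  (∀ k g, ρ k g ∈ unitary (Mat (N k))) ∧
    ∀ g h : Γ, Filter.Tendsto (fun k => ‖ρ k (g * h) - ρ k g * ρ k h‖)
      Filter.atTop (nhds 0)

/-- An asymptotic representation is perturbable to a genuine representation. -/
def Perturbable {Γ : Type*} [Group Γ] (N : ℕ → ℕ) (ρ : ∀ k, Γ → Mat (N k)) : Prop :=
  ∃ ρ' : ∀ k, Γ →* unitary (Mat (N k)),
    ∀ g : Γ, Filter.Tendsto (fun k => ‖ρ k g - (ρ' k g : Mat (N k))‖)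
      Filter.atTop (nhds 0)

/-- Matricial stability. -/
def MatriciallyStable (Γ : Type*) [Group Γ] : Prop :=
  ∀ (N : ℕ → ℕ) (ρ : ∀ k, Γ → Mat (N k)), IsAsymptoticRep N ρ → Perturbable N ρ

/-- A group is polycyclic if it has a finite subnormal chain with cyclic quotients. -/
def IsPolycyclic (G : Type*) [Group G] : Prop :=
  ∃ (m : ℕ) (s : Fin (m + 1) → Subgroup G),
    s 0 = ⊤ ∧ s (Fin.last m) = ⊥ ∧
    ∀ i : Fin m, s i.succ ≤ s i.castSucc ∧
      ∃ _ : ((s i.succ).subgroupOf (s i.castSucc)).Normal,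
        IsCyclic (↥(s i.castSucc) ⧸ (s i.succ).subgroupOf (s i.castSucc))

/-- A group is virtually polycyclic if it has a polycyclic subgroup of finite index. -/
def IsVirtuallyPolycyclic (G : Type*) [Group G] : Prop :=
  ∃ H : Subgroup G, H.FiniteIndex ∧ IsPolycyclic H

/-!
A cocycle `σ` representing the given class defines a central extension of `Γ` by `ℤ`, which is
residually finite because it is again virtually polycyclic. Its finite quotients in which the
generator of `ℤ` has large order carry unitary representations where that generator acts as a scalar
`e^{iθ}` with `θ > 0` small; along the canonical section these are projective representations of `Γ`
with multiplier `e^{iθσ}`, so letting `θ → 0` gives an asymptotic representation `ρ`.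

If `ρ` is close to genuine representations `π`, then `g ↦ Tr arg (π(g)⁻¹ ρ(g)) / (nθ)`, where `n` is
the dimension, has coboundary `σ` on any prescribed finite set: `Tr arg` is additive near `1`,
because its defect is continuous, vanishes at `(1, 1)` and lies in `2πℤ` by comparison with the
determinant. The linear system `δb = σ` is thus solvable over `ℝ` on finite sets, hence over `ℚ`
globally. As `Γ` is finitely generated, the denominators of `b` are bounded, so the class of `σ` is
torsion.
-/

section ResiduallyFinite

variable {G G' : Type*} [Group G] [Group G']

theorem residuallyFinite_of_injective [Group.ResiduallyFinite G'] (f : G →* G')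
    (hf : Function.Injective f) : Group.ResiduallyFinite G :=
  Group.residuallyFinite_of_forall_exists_finite_monoidHom fun g hg =>
    let ⟨H, hH⟩ := Group.exists_finiteIndexNormalSubgroup_notMem (f g)
      ((map_ne_one_iff f hf).2 hg)
    ⟨G' ⧸ H.toSubgroup, inferInstance, Subgroup.finite_quotient_of_finiteIndex,
      (QuotientGroup.mk' H.toSubgroup).comp f, fun h => hH ((QuotientGroup.eq_one_iff _).1 h)⟩

theorem residuallyFinite_of_forall_exists_normal
    (h : ∀ g : G, g ≠ 1 → ∃ (M : Subgroup G) (_ : M.Normal), g ∉ M ∧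
      Group.ResiduallyFinite (G ⧸ M)) : Group.ResiduallyFinite G := by
  refine Group.residuallyFinite_iff_exists_finiteIndex.2 fun g hg => ?_
  obtain ⟨M, _, hgM, _⟩ := h g hg
  obtain ⟨K, hK⟩ := Group.exists_finiteIndexNormalSubgroup_notMem (g : G ⧸ M)
    (mt (QuotientGroup.eq_one_iff g).1 hgM)
  exact ⟨(K.comap (QuotientGroup.mk' M)).toSubgroup, inferInstance, hK⟩

theorem residuallyFinite_of_finiteIndex (H : Subgroup G) [H.FiniteIndex]
    [Group.ResiduallyFinite H] : Group.ResiduallyFinite G := by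
  refine Group.residuallyFinite_iff_exists_finiteIndex.2 fun g hg => ?_
  by_cases hgH : g ∈ H
  · obtain ⟨K, hK⟩ := Group.exists_finiteIndexNormalSubgroup_notMem (⟨g, hgH⟩ : H)
      (by simpa using hg)
    refine ⟨K.toSubgroup.map H.subtype, ⟨?_⟩, ?_⟩
    · rw [Subgroup.index_map_subtype]
      exact mul_ne_zero Subgroup.FiniteIndex.index_ne_zero Subgroup.FiniteIndex.index_ne_zero
    · rintro ⟨x, hx, rfl⟩
      exact hK hx
  · exact ⟨H, inferInstance, hgH⟩

theorem residuallyFinite_multiplicative_int : Group.ResiduallyFinite (Multiplicative ℤ) := by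
  refine Group.residuallyFinite_of_forall_exists_finite_monoidHom fun k hk => ?_
  have hk0 : k.toAdd ≠ 0 := by simpa using hk
  refine ⟨Multiplicative (ZMod (k.toAdd.natAbs + 1)), inferInstance, inferInstance,
    AddMonoidHom.toMultiplicative (Int.castAddHom _), fun h => hk0 ?_⟩
  have hdvd : ((k.toAdd.natAbs + 1 : ℕ) : ℤ) ∣ k.toAdd :=
    (ZMod.intCast_zmod_eq_zero_iff_dvd _ _).1 h
  exact Int.eq_zero_of_abs_lt_dvd hdvd (by push_cast; omega)

theorem residuallyFinite_of_isCyclic [IsCyclic G] : Group.ResiduallyFinite G := by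
  cases finite_or_infinite G
  · infer_instance
  · have := residuallyFinite_multiplicative_int
    exact residuallyFinite_of_injective (intCyclicMulEquiv (G := G)).symm.toMonoidHom
      (intCyclicMulEquiv (G := G)).symm.injective

theorem finite_monoidHom_of_fg [Group.FG G] [Finite G'] : Finite (G →* G') := by
  obtain ⟨S, hS⟩ := Group.FG.out (G := G)
  refine Finite.of_injective (fun (f : G →* G') (s : S) => f s) fun f f' hff' => ?_
  exact MonoidHom.eq_of_eqOn_dense hS fun s hs => congrFun hff' ⟨s, hs⟩

theorem exists_characteristic_finiteIndex_notMem [Group.FG G] [Group.ResiduallyFinite G] {g : G}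
    (hg : g ≠ 1) : ∃ K : Subgroup G, K.Characteristic ∧ K.FiniteIndex ∧ g ∉ K := by
  obtain ⟨H, hH⟩ := Group.exists_finiteIndexNormalSubgroup_notMem g hg
  have : Finite (G ⧸ H.toSubgroup) := Subgroup.finite_quotient_of_finiteIndex
  have : Finite (G →* G ⧸ H.toSubgroup) := finite_monoidHom_of_fg
  refine ⟨⨅ f : G →* G ⧸ H.toSubgroup, f.ker, ?_,
    Subgroup.finiteIndex_iInf fun f => Subgroup.finiteIndex_ker f, fun h => hH ?_⟩
  · refine Subgroup.characteristic_iff_le_comap.2 fun φ x hx => ?_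
    simp only [Subgroup.mem_comap, Subgroup.mem_iInf, MonoidHom.mem_ker] at hx ⊢
    exact fun f => hx (f.comp φ.toMonoidHom)
  · exact (QuotientGroup.eq_one_iff g).1 (Subgroup.mem_iInf.1 h (QuotientGroup.mk' H.toSubgroup))

theorem finite_map_mk' (M N : Subgroup G) [M.Normal] [(M.subgroupOf N).FiniteIndex] :
    Finite (N.map (QuotientGroup.mk' M)) := by
  have hker : ((QuotientGroup.mk' M).comp N.subtype).ker = M.subgroupOf N := by
    rw [← MonoidHom.comap_ker, QuotientGroup.ker_mk', Subgroup.subgroupOf]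
  have hcard : (M.subgroupOf N).index ≠ 0 := Subgroup.FiniteIndex.index_ne_zero
  rw [← hker, Subgroup.index_ker, MonoidHom.range_comp, Subgroup.range_subtype] at hcard
  exact Nat.finite_of_card_ne_zero hcard

theorem exists_finite_quotient_lt_orderOf [Group.ResiduallyFinite G] {z : G}
    (hz : ¬ IsOfFinOrder z) (M : ℕ) :
    ∃ (K : Subgroup G) (_ : K.Normal), Finite (G ⧸ K) ∧ M < orderOf (z : G ⧸ K) := by
  have hsep : ∀ i : Fin M, ∃ K : FiniteIndexNormalSubgroup G, z ^ ((i : ℕ) + 1) ∉ K := fun i =>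
    Group.exists_finiteIndexNormalSubgroup_notMem _ fun h =>
      hz (isOfFinOrder_iff_pow_eq_one.2 ⟨_, Nat.succ_pos _, h⟩)
  choose K hK using hsep
  have hnormal := Subgroup.normal_iInf_normal fun i => (K i).isNormal'
  have : (⨅ i, (K i).toSubgroup).FiniteIndex := Subgroup.finiteIndex_iInf fun i => inferInstance
  refine ⟨⨅ i, (K i).toSubgroup, hnormal, Subgroup.finite_quotient_of_finiteIndex, ?_⟩
  by_contra! hle
  have hpos : 0 < orderOf (z : G ⧸ ⨅ i, (K i).toSubgroup) :=
    have : Finite (G ⧸ ⨅ i, (K i).toSubgroup) := Subgroup.finite_quotient_of_finiteIndex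
    orderOf_pos _
  have hmem : z ^ orderOf (z : G ⧸ ⨅ i, (K i).toSubgroup) ∈ ⨅ i, (K i).toSubgroup := by
    rw [← QuotientGroup.eq_one_iff, QuotientGroup.mk_pow, pow_orderOf_eq_one]
  refine hK ⟨orderOf (z : G ⧸ ⨅ i, (K i).toSubgroup) - 1, by omega⟩ ?_
  rw [Nat.sub_add_cancel hpos]
  exact Subgroup.mem_iInf.1 hmem _

end ResiduallyFinite

theorem fg_of_isCyclic {G : Type*} [Group G] [IsCyclic G] : Group.FG G := by
  obtain ⟨t, ht⟩ := isCyclic_iff_exists_zpowers_eq_top.1 ‹IsCyclic G›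
  exact Group.fg_iff.2 ⟨{t}, by rw [← Subgroup.zpowers_eq_closure, ht], Set.finite_singleton t⟩

theorem fg_of_finiteIndex {G : Type*} [Group G] (H : Subgroup G) [H.FiniteIndex] [Group.FG H] :
    Group.FG G := by
  have hH : H.FG := (Group.fg_iff_subgroup_fg H).1 inferInstance
  have hR : (Subgroup.closure (Set.range fun q : G ⧸ H => q.out)).FG :=
    (Subgroup.fg_iff _).2 ⟨_, rfl, Set.finite_range _⟩
  refine Group.fg_def.2 ?_
  convert hR.sup hH
  refine (eq_top_iff.2 fun g _ => ?_).symm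
  rw [← mul_inv_cancel_left (g : G ⧸ H).out g]
  exact Subgroup.mul_mem_sup (Subgroup.subset_closure ⟨(g : G ⧸ H), rfl⟩)
    (QuotientGroup.eq.1 (QuotientGroup.out_eq' (g : G ⧸ H)))

section CyclicExtension

variable {G : Type*} [Group G] (N : Subgroup G) [N.Normal] [IsCyclic (G ⧸ N)]

theorem exists_sup_zpowers_eq_top : ∃ t : G, N ⊔ Subgroup.zpowers t = ⊤ := by
  obtain ⟨q, hq⟩ := IsCyclic.exists_generator (α := G ⧸ N)
  obtain ⟨t, rfl⟩ := QuotientGroup.mk_surjective q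
  refine ⟨t, eq_top_iff.2 fun g _ => ?_⟩
  obtain ⟨k, hk⟩ := Subgroup.mem_zpowers_iff.1 (hq g)
  rw [← QuotientGroup.mk_zpow, QuotientGroup.eq] at hk
  have hg : g = t ^ k * ((t ^ k)⁻¹ * g) := (mul_inv_cancel_left _ _).symm
  rw [hg]
  exact mul_mem (Subgroup.mem_sup_right ⟨k, rfl⟩) (Subgroup.mem_sup_left hk)

theorem fg_of_isCyclic_quotient [Group.FG N] : Group.FG G := by
  obtain ⟨t, ht⟩ := exists_sup_zpowers_eq_top N
  refine Group.fg_def.2 (ht ▸ ((Group.fg_iff_subgroup_fg N).1 inferInstance).sup ?_)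
  exact (Group.fg_iff_subgroup_fg _).1 fg_of_isCyclic

theorem residuallyFinite_of_finite_of_isCyclic_quotient [Finite N] : Group.ResiduallyFinite G := by
  obtain ⟨t, ht⟩ := exists_sup_zpowers_eq_top N
  have hsurj : Function.Surjective fun n : N => ((n : G) : G ⧸ Subgroup.zpowers t) := by
    intro q
    obtain ⟨g, rfl⟩ := QuotientGroup.mk_surjective q
    obtain ⟨n, hn, s, hs, rfl⟩ := Subgroup.mem_sup_of_normal_left.1 (ht ▸ Subgroup.mem_top g)
    exact ⟨⟨n, hn⟩, (QuotientGroup.mk_mul_of_mem n hs).symm⟩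
  have := Finite.of_surjective _ hsurj
  have : (Subgroup.zpowers t).FiniteIndex := Subgroup.finiteIndex_of_finite_quotient
  have := residuallyFinite_of_isCyclic (G := Subgroup.zpowers t)
  exact residuallyFinite_of_finiteIndex (Subgroup.zpowers t)

theorem residuallyFinite_of_isCyclic_quotient [Group.FG N] [Group.ResiduallyFinite N] :
    Group.ResiduallyFinite G := by
  refine residuallyFinite_of_forall_exists_normal fun g hg => ?_
  suffices hM : ∃ M ≤ N, M.Normal ∧ (M.subgroupOf N).FiniteIndex ∧ g ∉ M by
    obtain ⟨M, hMN, _, _, hgM⟩ := hM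
    have : Finite (N.map (QuotientGroup.mk' M)) := finite_map_mk' M N
    have : IsCyclic ((G ⧸ M) ⧸ N.map (QuotientGroup.mk' M)) :=
      isCyclic_of_surjective _ (QuotientGroup.quotientQuotientEquivQuotient M N hMN).symm.surjective
    exact ⟨M, inferInstance, hgM,
      residuallyFinite_of_finite_of_isCyclic_quotient (N.map (QuotientGroup.mk' M))⟩
  by_cases hgN : g ∈ N
  · obtain ⟨K, _, hfin, hgK⟩ :=
      exists_characteristic_finiteIndex_notMem (g := (⟨g, hgN⟩ : N)) (by simpa using hg)
    -- `K` is characteristic in the normal subgroup `N`, so it is normal in `G`.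
    refine ⟨K.map N.subtype, Subgroup.map_subtype_le K, inferInstance, ?_, ?_⟩
    · rwa [Subgroup.subgroupOf, Subgroup.comap_map_eq_self_of_injective N.subtype_injective]
    · rintro ⟨x, hx, rfl⟩
      exact hgK hx
  · exact ⟨N, le_rfl, inferInstance, by rw [Subgroup.subgroupOf_self]; infer_instance, hgN⟩

end CyclicExtension

section Polycyclic

variable {E H : Type*} [Group E] [Group H]

theorem isCyclic_quotient_comap (f : E →* H) (N : Subgroup H) [N.Normal] [IsCyclic (H ⧸ N)] :
    IsCyclic (E ⧸ N.comap f) := by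
  refine isCyclic_of_injective (QuotientGroup.map (N.comap f) N f le_rfl) ?_
  refine (injective_iff_map_eq_one _).2 fun q => QuotientGroup.induction_on q fun x hx => ?_
  rw [QuotientGroup.map_mk, QuotientGroup.eq_one_iff] at hx
  exact (QuotientGroup.eq_one_iff x).2 hx

theorem IsPolycyclic.comap_induction (hH : IsPolycyclic H) (p : E →* H) {P : Subgroup E → Prop}
    (ker : P p.ker)
    (step : ∀ N G : Subgroup E, N ≤ G → ∀ _ : (N.subgroupOf G).Normal,
      IsCyclic (G ⧸ N.subgroupOf G) → P N → P G) : P ⊤ := by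
  obtain ⟨m, s, htop, hbot, hs⟩ := hH
  suffices h : ∀ i, P ((s i).comap p) by simpa only [htop, Subgroup.comap_top] using h 0
  intro i
  induction i using Fin.reverseInduction with
  | last => rwa [hbot]
  | cast i ih =>
    obtain ⟨hle, hnormal, hcyclic⟩ := hs i
    exact step _ _ (Subgroup.comap_mono hle) (hnormal.comap (p.subgroupComap (s i.castSucc)))
      (isCyclic_quotient_comap (p.subgroupComap (s i.castSucc))
        ((s i.succ).subgroupOf (s i.castSucc))) ih

theorem IsPolycyclic.fg_and_residuallyFinite_of_ker (hH : IsPolycyclic H) (p : E →* H)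
    [Group.FG p.ker] [Group.ResiduallyFinite p.ker] : Group.FG E ∧ Group.ResiduallyFinite E := by
  suffices h : Group.FG (⊤ : Subgroup E) ∧ Group.ResiduallyFinite (⊤ : Subgroup E) by
    obtain ⟨_, _⟩ := h
    exact ⟨Group.fg_of_surjective (f := (Subgroup.topEquiv (G := E)).toMonoidHom)
      Subgroup.topEquiv.surjective,
      residuallyFinite_of_injective (Subgroup.topEquiv (G := E)).symm.toMonoidHom
        Subgroup.topEquiv.symm.injective⟩
  refine hH.comap_induction (P := fun G => Group.FG G ∧ Group.ResiduallyFinite G) p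
    ⟨inferInstance, inferInstance⟩ fun N G hNG _ _ ⟨_, _⟩ => ?_
  let e := Subgroup.subgroupOfEquivOfLe hNG
  have := Group.fg_of_surjective (f := e.symm.toMonoidHom) e.symm.surjective
  have := residuallyFinite_of_injective e.toMonoidHom e.injective
  exact ⟨fg_of_isCyclic_quotient (N.subgroupOf G),
    residuallyFinite_of_isCyclic_quotient (N.subgroupOf G)⟩

theorem IsVirtuallyPolycyclic.fg_and_residuallyFinite_of_ker (hH : IsVirtuallyPolycyclic H)
    (p : E →* H) [Group.FG p.ker] [Group.ResiduallyFinite p.ker] :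
    Group.FG E ∧ Group.ResiduallyFinite E := by
  obtain ⟨K, _, hK⟩ := hH
  have : (K.comap p).FiniteIndex := ⟨by
    rw [Subgroup.index_comap]
    exact (inferInstance : (K.subgroupOf p.range).FiniteIndex).index_ne_zero⟩
  have hker : (p.subgroupComap K).ker = p.ker.subgroupOf (K.comap p) := by
    ext x
    exact Subtype.ext_iff
  let e : (p.subgroupComap K).ker ≃* p.ker :=
    (MulEquiv.subgroupCongr hker).trans (Subgroup.subgroupOfEquivOfLe (p.ker_le_comap K))
  have := Group.fg_of_surjective (f := e.symm.toMonoidHom) e.symm.surjective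
  have := residuallyFinite_of_injective e.toMonoidHom e.injective
  obtain ⟨_, _⟩ := hK.fg_and_residuallyFinite_of_ker (p.subgroupComap K)
  exact ⟨fg_of_finiteIndex (K.comap p), residuallyFinite_of_finiteIndex (K.comap p)⟩

theorem IsVirtuallyPolycyclic.fg (hH : IsVirtuallyPolycyclic H) : Group.FG H := by
  have hbot := (MonoidHom.ker_eq_bot_iff (MonoidHom.id H)).2 Function.injective_id
  have : Finite (MonoidHom.id H).ker := by rw [hbot]; infer_instance
  exact (hH.fg_and_residuallyFinite_of_ker (MonoidHom.id H)).1

end Polycyclic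

section CocycleExtension

variable {Γ : Type*} [Group Γ] {σ : Γ → Γ → ℤ}

theorem IsTwoCocycle.one_left (hσ : IsTwoCocycle σ) (g : Γ) : σ 1 g = σ 1 1 := by
  have h := hσ 1 1 g
  simp only [one_mul] at h
  omega

theorem IsTwoCocycle.one_right (hσ : IsTwoCocycle σ) (g : Γ) : σ g 1 = σ 1 1 := by
  have h := hσ g 1 1
  simp only [mul_one] at h
  omega

/-- The central extension of `Γ` by `ℤ` with underlying set `Γ × ℤ` and multiplication
`(g, a) * (h, b) = (g * h, a + b + σ g h)`. The cocycle `σ` is not assumed normalized, so the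
identity is `(1, -σ 1 1)`. -/
structure CocycleExtension {σ : Γ → Γ → ℤ} (_hσ : IsTwoCocycle σ) where
  base : Γ
  fiber : ℤ

namespace CocycleExtension

variable {hσ : IsTwoCocycle σ}

instance : Mul (CocycleExtension hσ) :=
  ⟨fun x y => ⟨x.base * y.base, x.fiber + y.fiber + σ x.base y.base⟩⟩

instance : One (CocycleExtension hσ) := ⟨⟨1, -σ 1 1⟩⟩

instance : Inv (CocycleExtension hσ) :=
  ⟨fun x => ⟨x.base⁻¹, -x.fiber - σ x.base⁻¹ x.base - σ 1 1⟩⟩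

theorem mk_mul_mk (g h : Γ) (a b : ℤ) :
    (⟨g, a⟩ * ⟨h, b⟩ : CocycleExtension hσ) = ⟨g * h, a + b + σ g h⟩ := rfl

theorem one_def : (1 : CocycleExtension hσ) = ⟨1, -σ 1 1⟩ := rfl

theorem inv_mk (g : Γ) (a : ℤ) :
    (⟨g, a⟩⁻¹ : CocycleExtension hσ) = ⟨g⁻¹, -a - σ g⁻¹ g - σ 1 1⟩ := rfl

instance : Group (CocycleExtension hσ) :=
  Group.ofLeftAxioms
    (fun ⟨g, a⟩ ⟨h, b⟩ ⟨k, c⟩ => by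
      have := hσ g h k
      simp only [mk_mul_mk, mul_assoc, mk.injEq, true_and] at this ⊢
      omega)
    (fun ⟨g, a⟩ => by
      simp only [one_def, mk_mul_mk, one_mul, hσ.one_left g, mk.injEq, true_and]
      omega)
    (fun ⟨g, a⟩ => by
      simp only [one_def, inv_mk, mk_mul_mk, inv_mul_cancel, mk.injEq, true_and]
      omega)

variable (hσ)

/-- The quotient map of the central extension onto `Γ`. -/
def proj : CocycleExtension hσ →* Γ := MonoidHom.mk' base fun _ _ => rfl

/-- The generator of the central copy of `ℤ`. -/
def center : CocycleExtension hσ := ⟨1, 1 - σ 1 1⟩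

/-- The set-theoretic section of `proj` whose failure to be multiplicative is `σ`. -/
def lift (g : Γ) : CocycleExtension hσ := ⟨g, 0⟩

theorem center_zpow (k : ℤ) : center hσ ^ k = ⟨1, k - σ 1 1⟩ := by
  let φ : Multiplicative ℤ →* CocycleExtension hσ :=
    MonoidHom.mk' (fun k => ⟨1, k.toAdd - σ 1 1⟩) fun a b => by
      simp only [mk_mul_mk, toAdd_mul, mul_one, mk.injEq, true_and]
      ring
  calc center hσ ^ k = φ (Multiplicative.ofAdd 1 ^ k) := (map_zpow φ _ k).symm
    _ = ⟨1, k - σ 1 1⟩ := by rw [← ofAdd_zsmul, smul_eq_mul, mul_one]; rfl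

theorem not_isOfFinOrder_center : ¬ IsOfFinOrder (center hσ) :=
  injective_zpow_iff_not_isOfFinOrder.1 fun k l h => by
    simpa only [center_zpow, mk.injEq, true_and, sub_left_inj] using h

theorem commute_center (x : CocycleExtension hσ) : Commute (center hσ) x := by
  obtain ⟨g, a⟩ := x
  simp only [Commute, SemiconjBy, center, mk_mul_mk, one_mul, mul_one, hσ.one_left g,
    hσ.one_right g, mk.injEq, true_and]
  ring

theorem lift_mul_lift (g h : Γ) :
    lift hσ g * lift hσ h = center hσ ^ σ g h * lift hσ (g * h) := by
  simp only [lift, center_zpow, mk_mul_mk, one_mul, hσ.one_left (g * h), mk.injEq, true_and]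
  ring

theorem ker_proj : (proj hσ).ker = Subgroup.zpowers (center hσ) := by
  ext ⟨g, a⟩
  simp only [MonoidHom.mem_ker, Subgroup.mem_zpowers_iff, center_zpow, mk.injEq, exists_and_left]
  exact ⟨fun h => ⟨Eq.symm h, a + σ 1 1, by ring⟩, fun h => h.1.symm⟩

end CocycleExtension

theorem IsVirtuallyPolycyclic.residuallyFinite_cocycleExtension (hΓ : IsVirtuallyPolycyclic Γ)
    (hσ : IsTwoCocycle σ) : Group.ResiduallyFinite (CocycleExtension hσ) := by
  have : IsCyclic (CocycleExtension.proj hσ).ker := by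
    rw [CocycleExtension.ker_proj]
    infer_instance
  have := residuallyFinite_of_isCyclic (G := (CocycleExtension.proj hσ).ker)
  have := fg_of_isCyclic (G := (CocycleExtension.proj hσ).ker)
  exact (hΓ.fg_and_residuallyFinite_of_ker (CocycleExtension.proj hσ)).2

end CocycleExtension

section TorsionClass

/- The values `c i` are attained iff every linear relation among the vectors `v i` also holds among
the `c i`, and each relation involves only finitely many indices. -/
theorem exists_dual_eq_of_forall_finset {F K V ι : Type*} [Field F] [Semiring K] [Nontrivial K]
    [Algebra F K] [AddCommGroup V] [Module F V] (v : ι → V) (c : ι → F)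
    (h : ∀ s : Finset ι, ∃ φ : V →ₗ[F] K, ∀ i ∈ s, φ (v i) = algebraMap F K (c i)) :
    ∃ φ : Module.Dual F V, ∀ i, φ (v i) = c i := by
  suffices hrange : Finsupp.linearCombination F c ∈
      LinearMap.range (Finsupp.linearCombination F v).dualMap by
    obtain ⟨φ, hφ⟩ := hrange
    exact ⟨φ, fun i => by simpa using LinearMap.congr_fun hφ (Finsupp.single i 1)⟩
  rw [LinearMap.range_dualMap_eq_dualAnnihilator_ker, Submodule.mem_dualAnnihilator]
  intro a ha
  obtain ⟨φ, hφ⟩ := h a.support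
  refine FaithfulSMul.algebraMap_injective F K ?_
  calc algebraMap F K (Finsupp.linearCombination F c a)
      = φ (Finsupp.linearCombination F v a) := by
        simp only [Finsupp.linearCombination_apply, Finsupp.sum, map_sum, map_smul, smul_eq_mul,
          map_mul, Algebra.smul_def]
        exact Finset.sum_congr rfl fun i hi => by rw [hφ i hi]
    _ = algebraMap F K 0 := by rw [LinearMap.mem_ker.1 ha, map_zero, map_zero]

variable {Γ : Type*} [Group Γ] {σ : Γ → Γ → ℤ}

/-- The group 2-coboundary `δb` of a 1-cochain `b` with trivial coefficients. -/
def coboundary {R : Type*} [AddGroup R] (b : Γ → R) (g h : Γ) : R :=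
  b g + b h - b (g * h)

theorem exists_rat_coboundary_eq
    (hσ : ∀ s : Finset (Γ × Γ), ∃ b : Γ → ℝ, ∀ p ∈ s, coboundary b p.1 p.2 = σ p.1 p.2) :
    ∃ b : Γ → ℚ, ∀ g h, coboundary b g h = σ g h := by
  obtain ⟨φ, hφ⟩ := exists_dual_eq_of_forall_finset (F := ℚ) (K := ℝ)
    (fun p : Γ × Γ => coboundary (fun g => Finsupp.single g (1 : ℚ)) p.1 p.2)
    (fun p => σ p.1 p.2) fun s => by
      obtain ⟨b, hb⟩ := hσ s
      refine ⟨Finsupp.linearCombination ℚ b, fun p hp => ?_⟩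
      simpa only [coboundary, map_sub, map_add, Finsupp.linearCombination_single, one_smul,
        map_intCast] using hb p hp
  refine ⟨fun g => φ (Finsupp.single g 1), fun g h => ?_⟩
  simpa only [coboundary, map_sub, map_add] using hφ (g, h)

theorem forall_integral_of_closure_eq_top {b : Γ → ℚ} (hb : ∀ g h, coboundary b g h = σ g h)
    {S : Set Γ} (hS : Subgroup.closure S = ⊤) {n : ℕ} (hn : ∀ g ∈ S, ∃ k : ℤ, n * b g = k) (g : Γ) :
    ∃ k : ℤ, n * b g = k := by
  simp only [coboundary] at hb
  have hone : b 1 = σ 1 1 := by simpa using hb 1 1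
  induction (hS ▸ Subgroup.mem_top g : g ∈ Subgroup.closure S) using
    Subgroup.closure_induction with
  | mem g hg => exact hn g hg
  | one => exact ⟨n * σ 1 1, by rw [hone]; push_cast; ring⟩
  | mul g h _ _ hg hh =>
    obtain ⟨k, hk⟩ := hg
    obtain ⟨l, hl⟩ := hh
    exact ⟨k + l - n * σ g h, by push_cast; rw [← hk, ← hl, ← hb g h]; ring⟩
  | inv g _ hg =>
    obtain ⟨k, hk⟩ := hg
    refine ⟨n * σ g g⁻¹ + n * σ 1 1 - k, ?_⟩
    push_cast
    rw [← hk, ← hb g g⁻¹, ← hone, mul_inv_cancel]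
    ring

theorem exists_int_coboundary_eq_mul [Group.FG Γ] {b : Γ → ℚ}
    (hb : ∀ g h, coboundary b g h = σ g h) :
    ∃ n : ℕ, 1 ≤ n ∧ ∃ c : Γ → ℤ, ∀ g h, coboundary c g h = n * σ g h := by
  obtain ⟨S, hS⟩ := Group.FG.out (G := Γ)
  have hgen : ∀ g ∈ (S : Set Γ), ∃ k : ℤ, ((∏ s ∈ S, (b s).den : ℕ) : ℚ) * b g = k := fun g hg => by
    obtain ⟨d, hd⟩ := Finset.dvd_prod_of_mem (fun s => (b s).den) hg
    refine ⟨d * (b g).num, ?_⟩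
    rw [hd]
    push_cast
    rw [← Rat.mul_den_eq_num]
    ring
  choose c hc using forall_integral_of_closure_eq_top hb hS hgen
  refine ⟨∏ s ∈ S, (b s).den, Finset.prod_pos fun s _ => (b s).den_pos, c, fun g h => ?_⟩
  suffices hQ : ((coboundary c g h : ℤ) : ℚ) = ((∏ s ∈ S, (b s).den : ℕ) : ℚ) * σ g h by
    exact_mod_cast hQ
  rw [← hb g h]
  simp only [coboundary]
  push_cast [← hc]
  ring

theorem exists_isTwoCocycle_of_not_torsion {Γ : Type} [Group Γ]
    (hcoh : ∃ x : groupCohomology (Rep.trivial ℤ Γ ℤ) 2, ∀ n : ℕ, 1 ≤ n → n • x ≠ 0) :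
    ∃ σ : Γ → Γ → ℤ, IsTwoCocycle σ ∧
      ∀ n : ℕ, 1 ≤ n → ¬ ∃ b : Γ → ℤ, ∀ g h, coboundary b g h = n * σ g h := by
  obtain ⟨x, hx⟩ := hcoh
  induction x using groupCohomology.H2_induction_on with
  | h x =>
    refine ⟨fun g h => x (g, h), fun g h j => ?_, fun n hn ⟨b, hb⟩ => hx n hn ?_⟩
    · have hx : x (g * h, j) + x (g, h) = x (h, j) + x (g, h * j) :=
        (groupCohomology.mem_cocycles₂_iff (A := Rep.trivial ℤ Γ ℤ) x).1 x.2 g h j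
      linarith
    · rw [← map_nsmul, groupCohomology.H2π_eq_zero_iff]
      refine ⟨b, funext fun ⟨g, h⟩ => ?_⟩
      calc (b h - b (g * h) + b g : ℤ) = coboundary b g h := by rw [coboundary]; ring
        _ = n * x (g, h) := hb g h
        _ = n • x (g, h) := (nsmul_eq_mul _ _).symm

end TorsionClass

section ScalarRepresentation

variable {Q : Type*} [Group Q]

section Restrict

variable {V : Type*} [NormedAddCommGroup V] [InnerProductSpace ℂ V] [FiniteDimensional ℂ V]

/-- The restriction of a finite-dimensional unitary representation to an invariant subspace. -/
def restrictUnitaryRep (R : Q →* (V ≃ₗᵢ[ℂ] V)) (W : Submodule ℂ V)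
    (hW : ∀ g, ∀ v ∈ W, R g v ∈ W) : Q →* (W ≃ₗᵢ[ℂ] W) :=
  MonoidHom.mk' (fun g => LinearIsometry.toLinearIsometryEquiv
    ⟨(R g).toLinearMap.restrict (hW g), fun v => (R g).norm_map v⟩ rfl) fun g h => by
      ext v
      exact DFunLike.congr_fun (map_mul R g h) (v : V)

/-- The matrix form of a finite-dimensional unitary representation, with respect to the standard
orthonormal basis. -/
def matrixUnitaryRep (R : Q →* (V ≃ₗᵢ[ℂ] V)) : Q →* unitary (Mat (Module.finrank ℂ V)) :=
  (Unitary.linearIsometryEquiv (𝕜 := ℂ)).symm.toMonoidHom.comp <|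
    MonoidHom.mk' (fun g => ((stdOrthonormalBasis ℂ V).repr.symm.trans (R g)).trans
      (stdOrthonormalBasis ℂ V).repr) fun g h => by
        ext1 v
        simp [map_mul]

theorem matrixUnitaryRep_apply (R : Q →* (V ≃ₗᵢ[ℂ] V)) (g : Q)
    (v : EuclideanSpace ℂ (Fin (Module.finrank ℂ V))) :
    (matrixUnitaryRep R g : Mat (Module.finrank ℂ V)) v =
      (stdOrthonormalBasis ℂ V).repr (R g ((stdOrthonormalBasis ℂ V).repr.symm v)) := rfl

theorem exists_unitaryRep_eq_smul_one_of_hasEigenvalue (R : Q →* (V ≃ₗᵢ[ℂ] V)) {c : Q}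
    (hc : ∀ g, Commute c g) {ω : ℂ} (hω : Module.End.HasEigenvalue (R c).toLinearMap ω) :
    ∃ (N : ℕ) (π : Q →* unitary (Mat N)), 1 ≤ N ∧ (π c : Mat N) = ω • 1 := by
  let W := Module.End.eigenspace (R c).toLinearMap ω
  have hW : ∀ g, ∀ v ∈ W, R g v ∈ W := fun g v hv =>
    Module.End.mapsTo_genEigenspace_of_comm (g := (R g).toLinearMap)
      (LinearMap.ext fun w => DFunLike.congr_fun ((hc g).map R) w) ω 1 hv
  have : Nontrivial W := Submodule.nontrivial_iff_ne_bot.2 hω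
  refine ⟨_, matrixUnitaryRep (restrictUnitaryRep R W hW), Module.finrank_pos (R := ℂ), ?_⟩
  ext1 v
  have hscalar : ∀ w : W, restrictUnitaryRep R W hW c w = ω • w := fun w =>
    Subtype.ext (Module.End.mem_eigenspace_iff.1 w.2)
  rw [matrixUnitaryRep_apply, hscalar, map_smul, LinearIsometryEquiv.apply_symm_apply]
  rfl

end Restrict

variable (Q) in
/-- The left regular representation of a finite group on `ℓ²(Q)`. -/
def leftRegularRep [Fintype Q] : Q →* (EuclideanSpace ℂ Q ≃ₗᵢ[ℂ] EuclideanSpace ℂ Q) :=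
  MonoidHom.mk' (fun g => LinearIsometryEquiv.piLpCongrLeft 2 ℂ ℂ (Equiv.mulLeft g)) fun g h => by
    ext v x
    exact congrArg v.ofLp (show (g * h)⁻¹ * x = h⁻¹ * (g⁻¹ * x) by rw [mul_inv_rev, mul_assoc])

theorem leftRegularRep_single [Fintype Q] (g h : Q) :
    leftRegularRep Q g (EuclideanSpace.single h 1) = EuclideanSpace.single (g * h) 1 :=
  LinearIsometryEquiv.piLpCongrLeft_single (Equiv.mulLeft g) h 1

theorem hasEigenvalue_leftRegularRep [Fintype Q] (c : Q) {ω : ℂ} (hω : ω ^ orderOf c = 1) :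
    Module.End.HasEigenvalue (leftRegularRep Q c).toLinearMap ω := by
  have hω0 : ω ≠ 0 := fun h => by simp [h, (orderOf_pos c).ne'] at hω
  let f : ℕ → EuclideanSpace ℂ Q := fun i => ω⁻¹ ^ i • EuclideanSpace.single (c ^ i) 1
  have hf : ∀ i, leftRegularRep Q c (f i) = ω • f (i + 1) := fun i => by
    rw [map_smul, leftRegularRep_single, smul_smul, pow_succ' ω⁻¹, mul_inv_cancel_left₀ hω0,
      pow_succ']
  have hperiod : ∑ i ∈ Finset.range (orderOf c), f (i + 1) =
      ∑ i ∈ Finset.range (orderOf c), f i := by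
    refine add_right_cancel (b := f 0) ?_
    have hend : f (orderOf c) = f 0 := by simp only [f, inv_pow, hω, pow_orderOf_eq_one, pow_zero]
    rw [← Finset.sum_range_succ', Finset.sum_range_succ, hend]
  refine Module.End.hasEigenvalue_of_hasEigenvector
    (x := ∑ i ∈ Finset.range (orderOf c), f i) ⟨Module.End.mem_eigenspace_iff.2 ?_, fun h => ?_⟩
  · calc leftRegularRep Q c (∑ i ∈ Finset.range (orderOf c), f i)
        = ω • ∑ i ∈ Finset.range (orderOf c), f (i + 1) := by
          rw [map_sum, Finset.smul_sum]
          exact Finset.sum_congr rfl fun i _ => hf i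
      _ = ω • ∑ i ∈ Finset.range (orderOf c), f i := by rw [hperiod]
  · have hcoeff : (∑ i ∈ Finset.range (orderOf c), f i) 1 = 1 := by
      rw [WithLp.ofLp_sum, Finset.sum_apply, Finset.sum_eq_single_of_mem 0]
      · simp [f]
      · exact Finset.mem_range.2 (orderOf_pos c)
      · intro i hi hi0
        have hne : c ^ i ≠ 1 := pow_ne_one_of_lt_orderOf hi0 (Finset.mem_range.1 hi)
        simp [f, hne.symm]
    rw [h] at hcoeff
    exact zero_ne_one hcoeff

theorem exists_unitaryRep_eq_smul_one [Finite Q] {c : Q} (hc : ∀ g, Commute c g) {ω : ℂ}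
    (hω : ω ^ orderOf c = 1) :
    ∃ (N : ℕ) (π : Q →* unitary (Mat N)), 1 ≤ N ∧ (π c : Mat N) = ω • 1 :=
  have := Fintype.ofFinite Q
  exists_unitaryRep_eq_smul_one_of_hasEigenvalue _ hc (hasEigenvalue_leftRegularRep c hω)

end ScalarRepresentation

section TraceArg

theorem exp_apply_of_apply_eq_smul {E : Type*} [NormedAddCommGroup E] [NormedSpace ℂ E]
    [CompleteSpace E] {T : E →L[ℂ] E} {v : E} {μ : ℂ} (h : T v = μ • v) :
    NormedSpace.exp T v = Complex.exp μ • v := by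
  have hpow : ∀ k : ℕ, (T ^ k) v = μ ^ k • v := fun k => by
    induction k with
    | zero => simp
    | succ k ih =>
      rw [pow_succ, mul_apply_eq_comp, h, map_smul, ih, smul_smul, pow_succ']
  have hT := (NormedSpace.exp_series_hasSum_exp' (𝕂 := ℂ) T).mapL
    (ContinuousLinearMap.apply ℂ E v)
  have hμ := (NormedSpace.exp_series_hasSum_exp' (𝕂 := ℂ) μ).smul_const v
  rw [Complex.exp_eq_exp_ℂ]
  refine hT.unique ?_
  simpa [hpow, smul_smul] using hμ

variable {n : ℕ}

theorem det_exp_I_smul {x : Mat n} (hx : IsSelfAdjoint x) :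
    LinearMap.det (NormedSpace.exp (Complex.I • x) : Mat n).toLinearMap =
      Complex.exp (Complex.I * (clmTrace x).re) := by
  have hsymm : x.toLinearMap.IsSymmetric := ContinuousLinearMap.isSelfAdjoint_iff_isSymmetric.1 hx
  have hn : Module.finrank ℂ (EuclideanSpace ℂ (Fin n)) = n := finrank_euclideanSpace_fin
  have hexp : ∀ i, NormedSpace.exp (Complex.I • x) (hsymm.eigenvectorBasis hn i) =
      Complex.exp (Complex.I * hsymm.eigenvalues hn i) • hsymm.eigenvectorBasis hn i := fun i =>
    exp_apply_of_apply_eq_smul <| by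
      rw [smul_apply, mul_smul]
      exact congrArg _ (hsymm.apply_eigenvectorBasis hn i)
  have hdiag : LinearMap.toMatrix (hsymm.eigenvectorBasis hn).toBasis
      (hsymm.eigenvectorBasis hn).toBasis (NormedSpace.exp (Complex.I • x) : Mat n).toLinearMap =
      Matrix.diagonal fun i => Complex.exp (Complex.I * hsymm.eigenvalues hn i) := by
    ext i j
    by_cases hij : i = j <;>
    simp [LinearMap.toMatrix_apply, hexp, hij]
  rw [← LinearMap.det_toMatrix (hsymm.eigenvectorBasis hn).toBasis, hdiag, Matrix.det_diagonal,
    ← Complex.exp_sum, ← Finset.mul_sum, clmTrace, ← Complex.ofReal_sum]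
  congr 3
  exact (hsymm.re_trace_eq_sum_eigenvalues hn).symm

/-- The real part of the trace of `arg u = -i log u`, with the principal branch of the logarithm. -/
def traceArg (u : unitary (Mat n)) : ℝ :=
  (clmTrace (Unitary.argSelfAdjoint u : Mat n)).re

theorem argSelfAdjoint_of_eq_smul_one {A : Type*} [CStarAlgebra A] {u : unitary A} {θ : ℝ}
    (hθ : |θ| < Real.pi) (hu : (u : A) = Complex.exp (θ * Complex.I) • 1) :
    (Unitary.argSelfAdjoint u : A) = (θ : ℂ) • 1 := by
  rw [Unitary.argSelfAdjoint_coe, hu, ← Algebra.algebraMap_eq_smul_one, cfc_algebraMap,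
    Complex.exp_mul_I,
    Complex.arg_cos_add_sin_mul_I ⟨(abs_lt.1 hθ).1, (abs_lt.1 hθ).2.le⟩,
    Algebra.algebraMap_eq_smul_one]

theorem traceArg_of_eq_smul_one {u : unitary (Mat n)} {θ : ℝ} (hθ : |θ| < Real.pi)
    (hu : (u : Mat n) = Complex.exp (θ * Complex.I) • 1) : traceArg u = θ * n := by
  rw [traceArg, argSelfAdjoint_of_eq_smul_one hθ hu]
  simp [clmTrace]

theorem traceArg_one : traceArg (1 : unitary (Mat n)) = 0 := by
  rw [traceArg_of_eq_smul_one (θ := 0) (by simpa using Real.pi_pos) (by simp), zero_mul]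

theorem det_eq_exp_traceArg {u : unitary (Mat n)} (hu : ‖(u : Mat n) - 1‖ < 2) :
    LinearMap.det (u : Mat n).toLinearMap = Complex.exp (Complex.I * traceArg u) := by
  rw [traceArg, ← det_exp_I_smul (Unitary.argSelfAdjoint u).2, ← selfAdjoint.expUnitary_coe,
    expUnitary_argSelfAdjoint hu]

theorem continuousOn_traceArg :
    ContinuousOn (traceArg (n := n)) {u | ‖(u : Mat n) - 1‖ < 2} := by
  let τ : Mat n →ₗ[ℂ] ℂ := LinearMap.trace ℂ _ ∘ₗ ContinuousLinearMap.coeLM ℂ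
  have hτ : Continuous fun x : selfAdjoint (Mat n) => (τ x).re :=
    Complex.continuous_re.comp (τ.continuous_of_finiteDimensional.comp continuous_subtype_val)
  refine hτ.comp_continuousOn (Unitary.continuousOn_argSelfAdjoint.mono fun u hu => ?_)
  rwa [Metric.mem_ball, Subtype.dist_eq, dist_eq_norm]

theorem norm_mul_sub_one_lt_two {A : Type*} [NormedRing A] [StarRing A] [CStarRing A]
    {u v : unitary A} (hu : ‖(u : A) - 1‖ < 1) (hv : ‖(v : A) - 1‖ < 1) :
    ‖((u * v : unitary A) : A) - 1‖ < 2 :=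
  calc ‖((u * v : unitary A) : A) - 1‖ = ‖((u : A) - 1) * v + ((v : A) - 1)‖ := by
        rw [Submonoid.coe_mul, sub_mul, one_mul, sub_add_sub_cancel]
    _ ≤ ‖((u : A) - 1) * v‖ + ‖(v : A) - 1‖ := norm_add_le _ _
    _ = ‖(u : A) - 1‖ + ‖(v : A) - 1‖ := by rw [CStarRing.norm_mul_coe_unitary]
    _ < 2 := by linarith

theorem traceArg_mul_sub_mem_zmultiples {u v : unitary (Mat n)} (hu : ‖(u : Mat n) - 1‖ < 1)
    (hv : ‖(v : Mat n) - 1‖ < 1) :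
    traceArg (u * v) - traceArg u - traceArg v ∈ AddSubgroup.zmultiples (2 * Real.pi) := by
  have hdet : LinearMap.det ((u * v : unitary (Mat n)) : Mat n).toLinearMap =
      LinearMap.det (u : Mat n).toLinearMap * LinearMap.det (v : Mat n).toLinearMap :=
    map_mul LinearMap.det _ _
  rw [det_eq_exp_traceArg (norm_mul_sub_one_lt_two hu hv), det_eq_exp_traceArg (by linarith),
    det_eq_exp_traceArg (by linarith), ← Complex.exp_add, Complex.exp_eq_exp_iff_exists_int] at hdet
  obtain ⟨k, hk⟩ := hdet
  refine AddSubgroup.mem_zmultiples_iff.2 ⟨k, ?_⟩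
  rw [zsmul_eq_mul]
  have hI : Complex.I * ((k * (2 * Real.pi) : ℝ) : ℂ) =
      Complex.I * ((traceArg (u * v) - traceArg u - traceArg v : ℝ) : ℂ) := by
    push_cast
    linear_combination -hk
  exact_mod_cast mul_left_cancel₀ Complex.I_ne_zero hI

theorem traceArg_mul {u v : unitary (Mat n)} (hu : ‖(u : Mat n) - 1‖ < 1)
    (hv : ‖(v : Mat n) - 1‖ < 1) : traceArg (u * v) = traceArg u + traceArg v := by
  let B : Set (unitary (Mat n)) := Metric.ball 1 1
  have hB : ∀ {w}, w ∈ B ↔ ‖(w : Mat n) - 1‖ < 1 := by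
    simp [B, Subtype.dist_eq, dist_eq_norm]
  have hconn : IsPreconnected (B ×ˢ B) :=
    have h := (Unitary.isPathConnected_ball (1 : unitary (Mat n)) 1 one_pos
      one_lt_two).isConnected.isPreconnected
    h.prod h
  have hcont : ContinuousOn (fun p : unitary (Mat n) × unitary (Mat n) =>
      traceArg (p.1 * p.2) - traceArg p.1 - traceArg p.2) (B ×ˢ B) := by
    refine ((continuousOn_traceArg.comp continuous_mul.continuousOn fun p hp => ?_).sub
      (continuousOn_traceArg.comp continuousOn_fst fun p hp => ?_)).sub
      (continuousOn_traceArg.comp continuousOn_snd fun p hp => ?_)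
    · exact norm_mul_sub_one_lt_two (hB.1 hp.1) (hB.1 hp.2)
    · exact (hB.1 hp.1).trans one_lt_two
    · exact (hB.1 hp.2).trans one_lt_two
  have h11 : (1 : unitary (Mat n)) ∈ B := Metric.mem_ball_self one_pos
  have hconst := hconn.constant_of_mapsTo (T := (AddSubgroup.zmultiples (2 * Real.pi) : Set ℝ))
    (isDiscrete_iff_discreteTopology.2
      (inferInstanceAs (DiscreteTopology (AddSubgroup.zmultiples (2 * Real.pi))))) hcont
    (fun p hp => traceArg_mul_sub_mem_zmultiples (hB.1 hp.1) (hB.1 hp.2))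
    (Set.mk_mem_prod (hB.2 hu) (hB.2 hv)) (Set.mk_mem_prod h11 h11)
  simp only [mul_one, traceArg_one, sub_zero] at hconst
  linarith

theorem argSelfAdjoint_conj {A : Type*} [CStarAlgebra A] (w : unitary A) {u : unitary A}
    (hu : ‖(u : A) - 1‖ < 2) :
    (Unitary.argSelfAdjoint (w * u * w⁻¹) : A) =
      Unitary.conjStarAlgAut ℂ A w (Unitary.argSelfAdjoint u) := by
  have hcont : ContinuousOn (fun z : ℂ => (z.arg : ℂ)) (spectrum ℂ (u : A)) :=
    Complex.continuous_ofReal.comp_continuousOn <| Complex.continuousOn_arg.mono <|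
      (Unitary.spectrum_subset_slitPlane_iff_norm_lt_two u.2).2 hu
  have hφ : Continuous (Unitary.conjStarAlgAut ℂ A w) := by
    have : ⇑(Unitary.conjStarAlgAut ℂ A w) = fun x => (w : A) * x * star (w : A) :=
      funext fun x => Unitary.conjStarAlgAut_apply w x
    rw [this]
    fun_prop
  have hwu : ((w * u * w⁻¹ : unitary A) : A) = Unitary.conjStarAlgAut ℂ A w u := by
    rw [Unitary.conjStarAlgAut_apply, ← Unitary.star_eq_inv]
    rfl
  rw [Unitary.argSelfAdjoint_coe, Unitary.argSelfAdjoint_coe, hwu]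
  exact (StarAlgHomClass.map_cfc (S := ℂ) (Unitary.conjStarAlgAut ℂ A w) _ (u : A) hcont hφ).symm

theorem traceArg_conj (w : unitary (Mat n)) {u : unitary (Mat n)} (hu : ‖(u : Mat n) - 1‖ < 2) :
    traceArg (w * u * w⁻¹) = traceArg u := by
  have hcomm : ∀ a b : Mat n, clmTrace (a * b) = clmTrace (b * a) := fun a b =>
    LinearMap.trace_mul_comm ℂ a.toLinearMap b.toLinearMap
  rw [traceArg, argSelfAdjoint_conj w hu, Unitary.conjStarAlgAut_apply, hcomm, ← mul_assoc]
  simp [traceArg]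

end TraceArg

section ProjectiveRepresentation

variable {Γ : Type*} [Group Γ] {σ : Γ → Γ → ℤ}

/-- `ρ` is a projective unitary representation with multiplier `e^{iθσ}`. -/
def IsProjectiveRep (σ : Γ → Γ → ℤ) (θ : ℝ) {n : ℕ} (ρ : Γ → unitary (Mat n)) : Prop :=
  ∀ g h, ((ρ g * ρ h * (ρ (g * h))⁻¹ : unitary (Mat n)) : Mat n) =
    Complex.exp ((σ g h * θ : ℝ) * Complex.I) • 1

theorem zpow_eq_smul_one_of_eq_smul_one {A : Type*} [Ring A] [StarMul A] [Algebra ℂ A]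
    {u : unitary A} {ω : ℂ} (hω : ω ≠ 0) (hu : (u : A) = ω • 1) (k : ℤ) :
    ((u ^ k : unitary A) : A) = ω ^ k • 1 := by
  have hunits : Unitary.toUnits u = Units.map (algebraMap ℂ A : ℂ →* A) (Units.mk0 ω hω) :=
    Units.ext (hu.trans (Algebra.algebraMap_eq_smul_one ω).symm)
  calc ((u ^ k : unitary A) : A) = (Unitary.toUnits u ^ k : Aˣ) := by rw [← map_zpow]; rfl
    _ = algebraMap ℂ A (ω ^ k) := by
      rw [hunits, ← map_zpow, Units.coe_map, Units.val_zpow_eq_zpow_val, Units.val_mk0]; rfl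
    _ = ω ^ k • 1 := Algebra.algebraMap_eq_smul_one _

theorem exists_isProjectiveRep (hσ : IsTwoCocycle σ) [Group.ResiduallyFinite (CocycleExtension hσ)]
    {ε : ℝ} (hε : 0 < ε) :
    ∃ (n : ℕ) (θ : ℝ) (ρ : Γ → unitary (Mat n)), 1 ≤ n ∧ 0 < θ ∧ θ < ε ∧
      IsProjectiveRep σ θ ρ := by
  obtain ⟨M, hM⟩ := exists_nat_gt (2 * Real.pi / ε)
  obtain ⟨K, _, _, hK⟩ :=
    exists_finite_quotient_lt_orderOf (CocycleExtension.not_isOfFinOrder_center hσ) M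
  let q := QuotientGroup.mk' K
  let c := q (CocycleExtension.center hσ)
  have hc : ∀ x, Commute c x := fun x => by
    obtain ⟨y, rfl⟩ := QuotientGroup.mk_surjective x
    exact (CocycleExtension.commute_center hσ y).map q
  have hpos : (0 : ℝ) < orderOf c := by exact_mod_cast (Nat.zero_le M).trans_lt hK
  let θ : ℝ := 2 * Real.pi / orderOf c
  have hroot : Complex.exp (θ * Complex.I) ^ orderOf c = 1 := by
    rw [← Complex.exp_nat_mul, ← Complex.exp_two_pi_mul_I]
    congr 1
    have : (orderOf c : ℂ) ≠ 0 := by exact_mod_cast hpos.ne'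
    simp only [θ]
    push_cast
    field_simp
  obtain ⟨n, π, hn, hπ⟩ := exists_unitaryRep_eq_smul_one hc hroot
  refine ⟨n, θ, fun g => π (q (CocycleExtension.lift hσ g)), hn, by positivity, ?_, fun g h => ?_⟩
  · have hMc : (M : ℝ) < orderOf c := by exact_mod_cast hK
    rw [div_lt_comm₀ hpos hε]
    exact hM.trans hMc
  · have hlift := congrArg (π ∘ q) (CocycleExtension.lift_mul_lift hσ g h)
    simp only [Function.comp_apply, map_mul, map_zpow] at hlift
    rw [hlift, mul_inv_cancel_right,
      zpow_eq_smul_one_of_eq_smul_one (Complex.exp_ne_zero _) hπ, ← Complex.exp_int_mul]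
    push_cast
    rw [mul_assoc]

theorem norm_mul_inv_sub_one {A : Type*} [NormedRing A] [StarRing A] [CStarRing A]
    (u v : unitary A) : ‖((u * v⁻¹ : unitary A) : A) - 1‖ = ‖(u : A) - v‖ := by
  rw [← CStarRing.norm_mul_coe_unitary _ v, sub_mul, one_mul, ← Submonoid.coe_mul,
    inv_mul_cancel_right]

theorem norm_inv_mul_sub_one {A : Type*} [NormedRing A] [StarRing A] [CStarRing A]
    (u v : unitary A) : ‖((u⁻¹ * v : unitary A) : A) - 1‖ = ‖(v : A) - u‖ := by
  rw [← CStarRing.norm_coe_unitary_mul u, mul_sub, mul_one, ← Submonoid.coe_mul,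
    mul_inv_cancel_left]

theorem norm_exp_smul_one_sub_one_le {A : Type*} [CStarAlgebra A] (t : ℝ) :
    ‖Complex.exp (t * Complex.I) • (1 : A) - 1‖ ≤ |t| :=
  calc ‖Complex.exp (t * Complex.I) • (1 : A) - 1‖
      = ‖Complex.exp (t * Complex.I) - 1‖ * ‖(1 : A)‖ := by
        rw [← norm_smul, sub_smul, one_smul]
    _ ≤ ‖Complex.exp (t * Complex.I) - 1‖ := by
      refine mul_le_of_le_one_right (norm_nonneg _) ?_
      nontriviality A
      exact CStarRing.norm_one.le
    _ ≤ |t| := by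
      rw [mul_comm]
      exact Real.norm_exp_I_mul_ofReal_sub_one_le

theorem isAsymptoticRep_of_isProjectiveRep {N : ℕ → ℕ} {θ : ℕ → ℝ}
    {ρ : ∀ k, Γ → unitary (Mat (N k))} (hρ : ∀ k, IsProjectiveRep σ (θ k) (ρ k))
    (hθ : Filter.Tendsto θ Filter.atTop (nhds 0)) :
    IsAsymptoticRep N fun k g => (ρ k g : Mat (N k)) := by
  refine ⟨fun k g => (ρ k g).2, fun g h => squeeze_zero (fun _ => norm_nonneg _) (fun k => ?_)
    (by simpa only [mul_zero, abs_zero] using (hθ.const_mul (σ g h : ℝ)).abs)⟩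
  rw [norm_sub_rev, ← Submonoid.coe_mul, ← norm_mul_inv_sub_one, hρ k g h]
  exact norm_exp_smul_one_sub_one_le _

theorem coboundary_traceArg_eq_mul {n : ℕ} {θ : ℝ} {ρ : Γ → unitary (Mat n)}
    (hρ : IsProjectiveRep σ θ ρ) (π : Γ →* unitary (Mat n)) {g h : Γ} (hθ : |σ g h * θ| < 1)
    (hg : ‖(ρ g : Mat n) - π g‖ < 1) (hh : ‖(ρ h : Mat n) - π h‖ < 1)
    (hgh : ‖(ρ (g * h) : Mat n) - π (g * h)‖ < 1) :
    coboundary (fun x => traceArg ((π x)⁻¹ * ρ x)) g h = σ g h * θ * n := by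
  set S := ρ g * ρ h * (ρ (g * h))⁻¹ with hS
  have hcomm : ∀ x : unitary (Mat n), S * x = x * S := fun x => Subtype.ext <| by
    have hSmat : (S : Mat n) = Complex.exp ((σ g h * θ : ℝ) * Complex.I) • 1 := hρ g h
    change (S : Mat n) * x = x * S
    rw [hSmat, smul_mul_assoc, one_mul, mul_smul_comm, mul_one]
  have hfactor : (π h)⁻¹ * ((π g)⁻¹ * ρ g) * (π h)⁻¹⁻¹ * ((π h)⁻¹ * ρ h) =
      S * ((π (g * h))⁻¹ * ρ (g * h)) := by
    rw [← mul_assoc S, hcomm, hS, map_mul]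
    group
  have hconj : ‖(((π h)⁻¹ * ((π g)⁻¹ * ρ g) * (π h)⁻¹⁻¹ : unitary (Mat n)) : Mat n) - 1‖ < 1 := by
    rwa [norm_mul_inv_sub_one, Submonoid.coe_mul, ← mul_sub_one, CStarRing.norm_coe_unitary_mul,
      norm_inv_mul_sub_one]
  have hS1 : ‖(S : Mat n) - 1‖ < 1 := by
    rw [hρ g h]
    exact (norm_exp_smul_one_sub_one_le _).trans_lt hθ
  rw [← norm_inv_mul_sub_one] at hg hh hgh
  have htrace := congrArg traceArg hfactor
  rw [traceArg_mul hconj hh, traceArg_mul hS1 hgh, traceArg_conj _ (hg.trans one_lt_two),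
    traceArg_of_eq_smul_one (hθ.trans (by linarith [Real.pi_gt_three])) (hρ g h)] at htrace
  rw [coboundary]
  linarith

end ProjectiveRepresentation

section Stability

variable {Γ : Type*} [Group Γ] {σ : Γ → Γ → ℤ}

theorem exists_real_coboundary_eq_on {N : ℕ → ℕ} {θ : ℕ → ℝ} {ρ : ∀ k, Γ → unitary (Mat (N k))}
    (hN : ∀ k, 1 ≤ N k) (hθ : ∀ k, 0 < θ k) (hθ0 : Filter.Tendsto θ Filter.atTop (nhds 0))
    (hρ : ∀ k, IsProjectiveRep σ (θ k) (ρ k))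
    (hpert : Perturbable N fun k g => (ρ k g : Mat (N k))) (s : Finset (Γ × Γ)) :
    ∃ b : Γ → ℝ, ∀ p ∈ s, coboundary b p.1 p.2 = σ p.1 p.2 := by
  obtain ⟨π, hπ⟩ := hpert
  have hclose : ∀ g, ∀ᶠ k in Filter.atTop, ‖(ρ k g : Mat (N k)) - π k g‖ < 1 := fun g =>
    (hπ g).eventually_lt_const one_pos
  have hsmall : ∀ p : Γ × Γ, ∀ᶠ k in Filter.atTop, |σ p.1 p.2 * θ k| < 1 := fun p => by
    have h := (hθ0.const_mul (σ p.1 p.2 : ℝ)).abs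
    rw [mul_zero, abs_zero] at h
    exact h.eventually_lt_const one_pos
  obtain ⟨k, hk⟩ := ((Filter.eventually_all_finset s).2 fun p _ => (hsmall p).and <|
    (hclose p.1).and <| (hclose p.2).and (hclose (p.1 * p.2))).exists
  refine ⟨fun x => traceArg ((π k x)⁻¹ * ρ k x) / (θ k * N k), fun p hp => ?_⟩
  obtain ⟨hsmall, hg, hh, hgh⟩ := hk p hp
  have hne : θ k * N k ≠ 0 :=
    mul_ne_zero (hθ k).ne' (Nat.cast_ne_zero.2 (Nat.one_le_iff_ne_zero.1 (hN k)))
  rw [coboundary, ← add_div, ← sub_div, div_eq_iff hne, ← mul_assoc]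
  exact coboundary_traceArg_eq_mul (hρ k) (π k) hsmall hg hh hgh

theorem MatriciallyStable.exists_coboundary_eq_mul [Group.FG Γ] (hΓ : MatriciallyStable Γ)
    (hσ : IsTwoCocycle σ) [Group.ResiduallyFinite (CocycleExtension hσ)] :
    ∃ m : ℕ, 1 ≤ m ∧ ∃ b : Γ → ℤ, ∀ g h, coboundary b g h = m * σ g h := by
  choose N θ ρ hN hθ hθlt hρ using fun k : ℕ =>
    exists_isProjectiveRep hσ (Nat.one_div_pos_of_nat (α := ℝ) (n := k))
  have hθ0 : Filter.Tendsto θ Filter.atTop (nhds 0) :=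
    squeeze_zero (fun k => (hθ k).le) (fun k => (hθlt k).le)
      tendsto_one_div_add_atTop_nhds_zero_nat
  have hpert := hΓ N _ (isAsymptoticRep_of_isProjectiveRep hρ hθ0)
  obtain ⟨b, hb⟩ := exists_rat_coboundary_eq
    (exists_real_coboundary_eq_on hN hθ hθ0 hρ hpert)
  exact exists_int_coboundary_eq_mul hb

theorem stmt2_general {Γ : Type} [Group Γ] [Group.FG Γ]
    (hrf : ∀ (σ : Γ → Γ → ℤ) (hσ : IsTwoCocycle σ), Group.ResiduallyFinite (CocycleExtension hσ))
    (hcoh : ∃ x : groupCohomology (Rep.trivial ℤ Γ ℤ) 2, ∀ n : ℕ, 1 ≤ n → n • x ≠ 0) :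
    ¬ MatriciallyStable Γ := fun hΓ => by
  obtain ⟨σ, hσ, hnontorsion⟩ := exists_isTwoCocycle_of_not_torsion hcoh
  have := hrf σ hσ
  obtain ⟨m, hm, hb⟩ := hΓ.exists_coboundary_eq_mul hσ
  exact hnontorsion m hm hb

end Stability

/-- A virtually polycyclic group whose second integral cohomology (with trivial
coefficients) contains an element of infinite additive order is not matricially stable. -/
theorem stmt2 {Γ : Type} [Group Γ] (hvp : IsVirtuallyPolycyclic Γ)
    (hcoh : ∃ x : groupCohomology (Rep.trivial ℤ Γ ℤ) 2, ∀ n : ℕ, 1 ≤ n → n • x ≠ 0) :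
    ¬ MatriciallyStable Γ :=
  have := hvp.fg
  stmt2_general (fun _ hσ => hvp.residuallyFinite_cocycleExtension hσ) hcoh
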